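/- Fix the standard structure of natural-number arithmetic (domain ℕ with 0, successor, addition, multiplication and order) as the underlying theory, so that program graphs over a fixed countable variable set, finite symbolic traces, and finite sets thereof all admit effective encodings as natural numbers. Then there is no computable function that, given (an encoding of) a program graph G, a set O of its locations, and k ∈ ℕ such that SymTraces^k_O(G) is finite, outputs (an encoding of) the set SymTraces^k_O(G). In particular, the predicate 'SymTraces^1_{{ℓ}}(G) is empty' is undecidable on inputs (G, ℓ) for which SymTraces^1_{{ℓ}}(G) is finite. -/

import Mathlib

open scoped Classical

namespace HyperSE11

/-! A deep (syntactic) model of program graphs over the standard structure of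
natural-number arithmetic, together with their symbolic execution, so that program
graphs, symbolic traces, and finite sets thereof admit effective encodings as natural
numbers. Program variables and symbolic variables are both indexed by `ℕ` (the two
indexings are kept disjoint by construction: program variables only occur in programs,
symbolic variables only in symbolic states). -/

/-- Arithmetic terms (over `ℕ`-indexed variables). -/
inductive DTerm : Type
  | var : ℕ → DTerm
  | zero : DTerm
  | succ : DTerm → DTerm
  | add : DTerm → DTerm → DTerm
  | mul : DTerm → DTerm → DTerm

/-- Evaluation of a term in the standard model. -/
def DTerm.eval (ρ : ℕ → ℕ) : DTerm → ℕ
  | .var x => ρ x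
  | .zero => 0
  | .succ t => t.eval ρ + 1
  | .add t u => t.eval ρ + u.eval ρ
  | .mul t u => t.eval ρ * u.eval ρ

/-- Substitution of terms for variables. -/
def DTerm.subst (σ : ℕ → DTerm) : DTerm → DTerm
  | .var x => σ x
  | .zero => .zero
  | .succ t => .succ (t.subst σ)
  | .add t u => .add (t.subst σ) (u.subst σ)
  | .mul t u => .mul (t.subst σ) (u.subst σ)

/-- Quantifier-free arithmetic formulas. -/
inductive DForm : Type
  | eq : DTerm → DTerm → DForm
  | lt : DTerm → DTerm → DForm
  | not : DForm → DForm
  | and : DForm → DForm → DForm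
  | or : DForm → DForm → DForm

/-- Satisfaction in the standard model. -/
def DForm.Holds (ρ : ℕ → ℕ) : DForm → Prop
  | .eq t u => t.eval ρ = u.eval ρ
  | .lt t u => t.eval ρ < u.eval ρ
  | .not f => ¬ f.Holds ρ
  | .and f g => f.Holds ρ ∧ g.Holds ρ
  | .or f g => f.Holds ρ ∨ g.Holds ρ

/-- Substitution on formulas. -/
def DForm.subst (σ : ℕ → DTerm) : DForm → DForm
  | .eq t u => .eq (t.subst σ) (u.subst σ)
  | .lt t u => .lt (t.subst σ) (u.subst σ)
  | .not f => .not (f.subst σ)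
  | .and f g => .and (f.subst σ) (g.subst σ)
  | .or f g => .or (f.subst σ) (g.subst σ)

/-- Instructions: assignment of a term to a program variable, or `havoc`. -/
inductive DInstr : Type
  | assign : ℕ → DTerm → DInstr
  | havoc : ℕ → DInstr

/-- A program graph: locations are natural numbers, the initial location is `0`, and the
edge relation together with the `effect` and `guard` functions on edges is represented by
a finite association list keyed by pairs of locations (only the first entry for a key is
relevant, so the list represents a function on the set of edges).  With the fixed initial
memory assigning `0` to every program variable. -/
structure DPG : Type where
  edges : List ((ℕ × ℕ) × DInstr × DForm)

/-- A symbolic memory: a finite association list mapping program variables to terms over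
the symbolic variables; absent variables are mapped to the term `0`, so that the empty
symbolic memory evaluates to the initial memory. -/
def smemGet (l : List (ℕ × DTerm)) (x : ℕ) : DTerm :=
  (l.lookup x).getD DTerm.zero

/-- A symbolic state: a location, a path formula over the symbolic variables, a symbolic
memory, and the counter of the fixed deterministic fresh-variable scheme. -/
structure DSymState : Type where
  loc : ℕ
  path : DForm
  smem : List (ℕ × DTerm)
  ctr : ℕ

/-- Symbolic execution of an instruction on (symbolic memory, fresh counter) pairs. -/
def DInstr.symExec : DInstr → (List (ℕ × DTerm) × ℕ) → (List (ℕ × DTerm) × ℕ) → Prop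
  | .assign x e, p, p' => p'.2 = p.2 ∧ p'.1 = (x, e.subst (smemGet p.1)) :: p.1
  | .havoc x, p, p' => p'.2 = p.2 + 1 ∧ p'.1 = (x, DTerm.var p.2) :: p.1

/-- The symbolic transition relation: follow an edge, conjoin the substituted guard to
the path formula, require satisfiability in the standard model, and symbolically execute
the effect of the edge. -/
def DPG.SymStep (G : DPG) (s₁ s₂ : DSymState) : Prop :=
  ∃ ig : DInstr × DForm, G.edges.lookup (s₁.loc, s₂.loc) = some ig ∧
    s₂.path = DForm.and s₁.path (ig.2.subst (smemGet s₁.smem)) ∧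
    (∃ ρ : ℕ → ℕ, s₂.path.Holds ρ) ∧
    ig.1.symExec (s₁.smem, s₁.ctr) (s₂.smem, s₂.ctr)

/-- The initial symbolic state `⟨ℓ₀, true, m̂₀⟩` (with counter `0`). -/
def initDSym : DSymState :=
  ⟨0, DForm.eq DTerm.zero DTerm.zero, [], 0⟩

/-- `SymTraces*(G)`. -/
def DPG.SymTraces (G : DPG) : Set (List DSymState) :=
  { τ | τ.head? = some initDSym ∧ τ.Chain' G.SymStep }

/-- Projection of a symbolic trace onto a (finite) set `O` of observed locations. -/
def obsD (O : List ℕ) (τ : List DSymState) : List DSymState :=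
  τ.filter fun s => decide (s.loc ∈ O)

/-- `SymTraces^k_O(G)`: observational projections of symbolic traces, of length `k`. -/
def DPG.SymTracesKO (G : DPG) (O : List ℕ) (k : ℕ) : Set (List DSymState) :=
  { t | (∃ τ ∈ G.SymTraces, t = obsD O τ) ∧ t.length = k }

/-! ### Effective encodings as natural numbers. -/

/-- Encoding of terms. -/
def encodeDTerm : DTerm → ℕ
  | .var x => Nat.pair 0 x
  | .zero => Nat.pair 1 0
  | .succ t => Nat.pair 2 (encodeDTerm t)
  | .add t u => Nat.pair 3 (Nat.pair (encodeDTerm t) (encodeDTerm u))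
  | .mul t u => Nat.pair 4 (Nat.pair (encodeDTerm t) (encodeDTerm u))

/-- Encoding of formulas. -/
def encodeDForm : DForm → ℕ
  | .eq t u => Nat.pair 0 (Nat.pair (encodeDTerm t) (encodeDTerm u))
  | .lt t u => Nat.pair 1 (Nat.pair (encodeDTerm t) (encodeDTerm u))
  | .not f => Nat.pair 2 (encodeDForm f)
  | .and f g => Nat.pair 3 (Nat.pair (encodeDForm f) (encodeDForm g))
  | .or f g => Nat.pair 4 (Nat.pair (encodeDForm f) (encodeDForm g))

/-- Encoding of instructions. -/
def encodeDInstr : DInstr → ℕ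
  | .assign x e => Nat.pair 0 (Nat.pair x (encodeDTerm e))
  | .havoc x => Nat.pair 1 x

/-- Encoding of lists. -/
def encodeList {α : Type} (f : α → ℕ) : List α → ℕ
  | [] => 0
  | a :: l => Nat.pair (f a) (encodeList f l) + 1

/-- Encoding of symbolic states. -/
def encodeDSymState (s : DSymState) : ℕ :=
  Nat.pair s.loc <| Nat.pair (encodeDForm s.path) <|
    Nat.pair (encodeList (fun p => Nat.pair p.1 (encodeDTerm p.2)) s.smem) s.ctr

/-- Encoding of symbolic traces. -/
def encodeDSymTrace : List DSymState → ℕ :=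
  encodeList encodeDSymState

/-- Encoding of program graphs. -/
def encodeDPG (G : DPG) : ℕ :=
  encodeList
    (fun e => Nat.pair (Nat.pair e.1.1 e.1.2)
      (Nat.pair (encodeDInstr e.2.1) (encodeDForm e.2.2)))
    G.edges

/-- Encoding of an input `(G, O, k)`. -/
def encodeInput (G : DPG) (O : List ℕ) (k : ℕ) : ℕ :=
  Nat.pair (encodeDPG G) (Nat.pair (encodeList id O) k)

/-! ### A small while language, compiled to deterministic program graphs. -/

/-- While programs. -/
inductive Cmd : Type
  | asg : ℕ → DTerm → Cmd
  | seq : Cmd → Cmd → Cmd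
  | loop : DForm → Cmd → Cmd

/-- Big-step semantics. -/
inductive Exec : Cmd → (ℕ → ℕ) → (ℕ → ℕ) → Prop
  | asg (x e m) : Exec (.asg x e) m (Function.update m x (e.eval m))
  | seq {c d m₁ m₂ m₃} : Exec c m₁ m₂ → Exec d m₂ m₃ → Exec (.seq c d) m₁ m₃
  | finish {g c m} : ¬ g.Holds m → Exec (.loop g c) m m
  | again {g c m₁ m₂ m₃} : g.Holds m₁ → Exec c m₁ m₂ → Exec (.loop g c) m₂ m₃ →
      Exec (.loop g c) m₁ m₃

/-- The trivially true formula. -/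
def fTrue : DForm := .eq .zero .zero

/-- An instruction without effect. -/
def nopI : DInstr := .assign 0 (.var 0)

/-- Edges. -/
abbrev Edge := (ℕ × ℕ) × DInstr × DForm

/-- Number of locations used by a command. -/
def Cmd.size : Cmd → ℕ
  | .asg _ _ => 1
  | .seq c d => c.size + d.size
  | .loop _ c => c.size + 2

/-- Edges of the compiled command, entry `s`, exit `s + size`. -/
def Cmd.compile : Cmd → ℕ → List Edge
  | .asg x e, s => [((s, s + 1), .assign x e, fTrue)]
  | .seq c d, s => c.compile s ++ d.compile (s + c.size)
  | .loop g c, s =>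
      ((s, s + 1), nopI, g) :: ((s, s + (c.size + 2)), nopI, .not g) ::
        ((s + 1 + c.size, s), nopI, fTrue) :: c.compile (s + 1)

/-- Concrete steps along edges. -/
def CStep (E : List Edge) (p q : ℕ × (ℕ → ℕ)) : Prop :=
  ∃ x e g, ((p.1, q.1), DInstr.assign x e, g) ∈ E ∧ g.Holds p.2 ∧
    q.2 = Function.update p.2 x (e.eval p.2)

theorem fTrue_holds (m : ℕ → ℕ) : fTrue.Holds m := rfl

theorem CStep.nop {E : List Edge} {l l' : ℕ} {g : DForm} {m : ℕ → ℕ}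
    (h : ((l, l'), nopI, g) ∈ E) (hg : g.Holds m) : CStep E (l, m) (l', m) :=
  ⟨0, .var 0, g, h, hg, by simp [DTerm.eval]⟩

theorem Exec.reach {c : Cmd} {m m' : ℕ → ℕ} (h : Exec c m m') :
    ∀ (E : List Edge) (s : ℕ), c.compile s ⊆ E →
      Relation.ReflTransGen (CStep E) (s, m) (s + c.size, m') := by
  induction h with
  | asg x e m =>
    intro E s hE
    exact .single ⟨x, e, fTrue, hE (by simp [Cmd.compile, Cmd.size]), rfl, rfl⟩
  | seq _ _ ih₁ ih₂ =>
    intro E s hE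
    simp only [Cmd.compile, List.append_subset] at hE
    have h2 := ih₂ E _ hE.2
    rw [Nat.add_assoc] at h2
    exact (ih₁ E s hE.1).trans h2
  | finish hg =>
    intro E s hE
    exact .single (CStep.nop (g := .not _) (hE (by simp [Cmd.compile, Cmd.size])) hg)
  | @again g c m₁ m₂ m₃ hg _ _ ih₁ ih₂ =>
    intro E s hE
    have h0 := hE
    simp only [Cmd.compile, List.cons_subset] at h0
    have a1 : CStep E (s, m₁) (s + 1, m₁) := CStep.nop h0.1 hg
    have a2 := ih₁ E (s + 1) h0.2.2.2
    have a3 : CStep E (s + 1 + c.size, m₂) (s, m₂) := CStep.nop h0.2.2.1 rfl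
    exact ((Relation.ReflTransGen.single a1).trans a2).trans
      ((Relation.ReflTransGen.single a3).trans (ih₂ E s hE))

/-- Well-formedness: sources in `[s,t)`, no havoc, deterministic. -/
structure WF (E : List Edge) (s t : ℕ) : Prop where
  src : ∀ e ∈ E, s ≤ e.1.1 ∧ e.1.1 < t
  asg : ∀ e ∈ E, ∃ x u, e.2.1 = DInstr.assign x u
  key : ∀ e₁ ∈ E, ∀ e₂ ∈ E, e₁.1 = e₂.1 → e₁ = e₂
  det : ∀ e₁ ∈ E, ∀ e₂ ∈ E, e₁.1.1 = e₂.1.1 → ∀ m, e₁.2.2.Holds m → e₂.2.2.Holds m → e₁ = e₂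

theorem WF.append {E F : List Edge} {s t u : ℕ} (hE : WF E s t) (hF : WF F t u)
    (hst : s ≤ t) (htu : t ≤ u) : WF (E ++ F) s u := by
  refine ⟨?_, ?_, ?_, ?_⟩
  · intro e he
    rcases List.mem_append.1 he with h | h
    · have := hE.src e h; omega
    · have := hF.src e h; omega
  · intro e he
    rcases List.mem_append.1 he with h | h
    · exact hE.asg e h
    · exact hF.asg e h
  · intro e₁ h₁ e₂ h₂ hk
    have hk' : e₁.1.1 = e₂.1.1 := by rw [hk]
    rcases List.mem_append.1 h₁ with h₁ | h₁ <;> rcases List.mem_append.1 h₂ with h₂ | h₂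
    · exact hE.key e₁ h₁ e₂ h₂ hk
    · have := hE.src e₁ h₁; have := hF.src e₂ h₂; omega
    · have := hF.src e₁ h₁; have := hE.src e₂ h₂; omega
    · exact hF.key e₁ h₁ e₂ h₂ hk
  · intro e₁ h₁ e₂ h₂ hk'
    rcases List.mem_append.1 h₁ with h₁ | h₁ <;> rcases List.mem_append.1 h₂ with h₂ | h₂
    · exact hE.det e₁ h₁ e₂ h₂ hk'
    · have := hE.src e₁ h₁; have := hF.src e₂ h₂; omega
    · have := hF.src e₁ h₁; have := hE.src e₂ h₂; omega
    · exact hF.det e₁ h₁ e₂ h₂ hk'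

theorem WF.single (s t x : ℕ) (u : DTerm) (g : DForm) :
    WF [((s, t), DInstr.assign x u, g)] s (s + 1) := by
  refine ⟨?_, ?_, ?_, ?_⟩ <;> simp

theorem WF.perm {E F : List Edge} {s t : ℕ} (h : WF E s t) (hEF : F ⊆ E) : WF F s t :=
  ⟨fun e he => h.src e (hEF he), fun e he => h.asg e (hEF he),
    fun e he f hf => h.key e (hEF he) f (hEF hf), fun e he f hf => h.det e (hEF he) f (hEF hf)⟩

theorem WF.branch (s a b : ℕ) (g : DForm) (hab : a ≠ b) :
    WF [((s, a), nopI, g), ((s, b), nopI, .not g)] s (s + 1) := by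
  refine ⟨?_, ?_, ?_, ?_⟩
  · simp
  · intro e he
    simp only [List.mem_cons, List.not_mem_nil, or_false] at he
    rcases he with rfl | rfl <;> exact ⟨_, _, rfl⟩
  · intro e₁ h₁ e₂ h₂ hk
    simp only [List.mem_cons, List.not_mem_nil, or_false] at h₁ h₂
    rcases h₁ with rfl | rfl <;> rcases h₂ with rfl | rfl <;> simp_all
  · intro e₁ h₁ e₂ h₂ hk m p q
    simp only [List.mem_cons, List.not_mem_nil, or_false] at h₁ h₂
    rcases h₁ with rfl | rfl <;> rcases h₂ with rfl | rfl
    · rfl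
    · exact absurd p q
    · exact absurd q p
    · rfl

theorem Cmd.compile_wf (c : Cmd) : ∀ s, WF (c.compile s) s (s + c.size) := by
  induction c with
  | asg x e => intro s; exact WF.single _ _ _ _ _
  | seq c d ihc ihd =>
    intro s
    have := (ihc s).append (ihd (s + c.size)) (by omega) (by omega)
    rwa [Nat.add_assoc] at this
  | loop g c ih =>
    intro s
    have h1 := WF.branch s (s + 1) (s + (c.size + 2)) g (by omega)
    have h2 := WF.single (s + 1 + c.size) s 0 (.var 0) fTrue
    have h3 := (h1.append (ih (s + 1)) (by omega) (by omega)).append h2 (by omega) (by omega)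
    have e : s + 1 + c.size + 1 = s + (Cmd.loop g c).size := by simp [Cmd.size]; omega
    rw [e] at h3
    refine h3.perm ?_
    intro x hx
    simp only [Cmd.compile, List.mem_cons, List.mem_append, List.not_mem_nil, or_false] at hx ⊢
    have : nopI = DInstr.assign 0 (.var 0) := rfl
    rw [← this]
    tauto

/-! ### Primitive recursive functions are computed by while programs. -/

/-- `f` is computed by while programs, for all register allocations. -/
def Comp {n : ℕ} (f : List.Vector ℕ n → ℕ) : Prop :=
  ∀ (a : Fin n → ℕ) (r : ℕ), (∀ i, a i < r) → ∃ c : Cmd, ∀ m : ℕ → ℕ, ∃ m' : ℕ → ℕ,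
    Exec c m m' ∧ m' r = f (List.Vector.ofFn fun i => m (a i)) ∧ ∀ x < r, m' x = m x

theorem comp_asg {n : ℕ} (f : List.Vector ℕ n → ℕ) 
    (h : ∀ a : Fin n → ℕ, ∃ e : DTerm, ∀ m, e.eval m = f (List.Vector.ofFn fun i => m (a i))) :
    Comp f := by
  intro a r _
  obtain ⟨e, he⟩ := h a
  refine ⟨.asg r e, fun m => ⟨_, .asg _ _ _, by simp [he], ?_⟩⟩
  intro x hx
  exact Function.update_of_ne (by omega) _ _

theorem comp_args {n k : ℕ} (g : Fin k → List.Vector ℕ n → ℕ) (hg : ∀ i, Comp (g i))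
    (a : Fin n → ℕ) (r : ℕ) (ha : ∀ i, a i < r) :
    ∃ c : Cmd, ∀ m : ℕ → ℕ, ∃ m' : ℕ → ℕ, Exec c m m' ∧
      (∀ i : Fin k, m' (r + i) = g i (List.Vector.ofFn fun i => m (a i))) ∧
      ∀ x < r, m' x = m x := by
  induction k with
  | zero =>
    refine ⟨.asg r .zero, fun m => ⟨_, .asg _ _ _, fun i => i.elim0, ?_⟩⟩
    intro x hx
    exact Function.update_of_ne (by omega) _ _
  | succ k ih =>
    obtain ⟨c, hc⟩ := ih (fun i => g i.castSucc) (fun i => hg _)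
    obtain ⟨d, hd⟩ := hg (Fin.last k) a (r + k) (fun i => (ha i).trans_le (by omega))
    refine ⟨.seq c d, fun m => ?_⟩
    obtain ⟨m₁, e₁, v₁, p₁⟩ := hc m
    obtain ⟨m₂, e₂, v₂, p₂⟩ := hd m₁
    refine ⟨m₂, .seq e₁ e₂, ?_, ?_⟩
    · intro i
      refine Fin.lastCases ?_ (fun i => ?_) i
      · simp only [Fin.val_last]
        rw [v₂]
        congr 2
        funext i
        exact p₁ _ (ha i)
      · simp only [Fin.val_castSucc]
        rw [p₂ _ (by omega)]
        exact v₁ i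
    · intro x hx
      rw [p₂ x (by omega), p₁ x hx]

theorem comp_comp {n k : ℕ} {f : List.Vector ℕ k → ℕ} (g : Fin k → List.Vector ℕ n → ℕ)
    (hf : Comp f) (hg : ∀ i, Comp (g i)) :
    Comp fun a => f (List.Vector.ofFn fun i => g i a) := by
  intro a r ha
  obtain ⟨c, hc⟩ := comp_args g hg a r ha
  obtain ⟨d, hd⟩ := hf (fun i => r + i) (r + k) (fun i => by omega)
  refine ⟨.seq (.seq c d) (.asg r (.var (r + k))), fun m => ?_⟩
  obtain ⟨m₁, e₁, v₁, p₁⟩ := hc m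
  obtain ⟨m₂, e₂, v₂, p₂⟩ := hd m₁
  refine ⟨_, .seq (.seq e₁ e₂) (.asg _ _ _), ?_, ?_⟩
  · simp only [DTerm.eval, Function.update_self]
    rw [v₂]
    simp only [v₁]
  · intro x hx
    rw [Function.update_of_ne (by omega), p₂ x (by omega), p₁ x hx]

theorem comp_prec {n : ℕ} {f : List.Vector ℕ n → ℕ} {g : List.Vector ℕ (n + 2) → ℕ}
    (hf : Comp f) (hg : Comp g) :
    Comp fun v : List.Vector ℕ (n + 1) =>
      v.head.rec (f v.tail) fun y IH => g (y ::ᵥ IH ::ᵥ v.tail) := by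
  intro a r ha
  obtain ⟨c, hc⟩ := hf (fun i => a i.succ) r (fun i => ha _)
  obtain ⟨d, hd⟩ := hg (Fin.cons (r + 1) (Fin.cons r fun i => a i.succ)) (r + 2) (by
    intro i
    refine Fin.cases ?_ (fun i => ?_) i
    · simp
    · refine Fin.cases ?_ (fun i => ?_) i
      · simp
      · simpa using (ha i.succ).trans_le (by omega))
  let body : Cmd := .seq d (.seq (.asg r (.var (r + 2))) (.asg (r + 1) (.succ (.var (r + 1)))))
  let gd : DForm := .lt (.var (r + 1)) (.var (a 0))
  refine ⟨.seq c (.seq (.asg (r + 1) .zero) (.loop gd body)), fun m => ?_⟩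
  set v : List.Vector ℕ n := List.Vector.ofFn fun i => m (a i.succ) with hv
  let F : ℕ → ℕ := fun k => k.rec (f v) fun y IH => g (y ::ᵥ IH ::ᵥ v)
  have key : ∀ j k : ℕ, ∀ m₁ : ℕ → ℕ, k + j = m (a 0) → m₁ (r + 1) = k → m₁ r = F k →
      (∀ x < r, m₁ x = m x) → ∃ m', Exec (.loop gd body) m₁ m' ∧ m' r = F (m (a 0)) ∧
        ∀ x < r, m' x = m x := by
    intro j
    induction j with
    | zero =>
      intro k m₁ hk h1 h2 h3
      refine ⟨m₁, .finish ?_, ?_, h3⟩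
      · simp [gd, DForm.Holds, DTerm.eval, h1, h3 _ (ha 0)]; omega
      · rw [h2]; congr 1
    | succ j ih =>
      intro k m₁ hk h1 h2 h3
      obtain ⟨m₂, e₂, v₂, p₂⟩ := hd m₁
      have hval : m₂ (r + 2) = F (k + 1) := by
        rw [v₂]
        show _ = g (k ::ᵥ F k ::ᵥ v)
        congr 1
        rw [List.Vector.ofFn, List.Vector.ofFn]
        simp only [Fin.cons_zero, Fin.cons_succ, h1, h2]
        congr 2
        rw [hv]
        congr 1
        funext i
        exact h3 _ (ha _)
      obtain ⟨m', e', v', p'⟩ := ih (k + 1)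
        (Function.update (Function.update m₂ r (m₂ (r + 2))) (r + 1) (k + 1)) (by omega)
        (by simp) (by rw [Function.update_of_ne (by omega), Function.update_self, hval])
        (by
          intro x hx
          rw [Function.update_of_ne (by omega), Function.update_of_ne (by omega),
            p₂ x (by omega), h3 x hx])
      refine ⟨m', .again ?_ (.seq e₂ (.seq (.asg _ _ _) (.asg _ _ _))) ?_, v', p'⟩
      · simp [gd, DForm.Holds, DTerm.eval, h1, h3 _ (ha 0)]; omega
      · convert e' using 2
        · rfl
        show Function.update m₂ r (m₂ (r + 2)) (r + 1) + 1 = k + 1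
        rw [Function.update_of_ne (by omega), p₂ _ (by omega), h1]
  obtain ⟨m₁, e₁, v₁, p₁⟩ := hc m
  obtain ⟨m', e', v', p'⟩ := key (m (a 0)) 0 (Function.update m₁ (r + 1) 0) (by omega) (by simp)
    (by rw [Function.update_of_ne (by omega), v₁]; rfl) (by
      intro x hx
      rw [Function.update_of_ne (by omega), p₁ x hx])
  refine ⟨m', .seq e₁ (.seq (.asg _ _ _) e'), ?_, p'⟩
  rw [v']
  simp only [F, hv, List.Vector.ofFn, List.Vector.head_cons, List.Vector.tail_cons]

theorem comp_of_primrec {n : ℕ} {f : List.Vector ℕ n → ℕ} (h : Nat.Primrec' f) : Comp f := by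
  induction h with
  | zero => exact comp_asg _ fun a => ⟨.zero, fun m => rfl⟩
  | succ => exact comp_asg _ fun a => ⟨.succ (.var (a 0)), fun m => rfl⟩
  | get i => exact comp_asg _ fun a => ⟨.var (a i), fun m => by simp [DTerm.eval]⟩
  | comp g _ _ hf hg => exact comp_comp g hf hg
  | prec _ _ hf hg => exact comp_prec hf hg

/-- Unbounded search for the first `k` with `h k (m 0) ≠ 0`; the value is left in register 2. -/
theorem search {h : ℕ → ℕ → ℕ} (hh : Primrec₂ h) :
    ∃ c : Cmd, ∀ (m : ℕ → ℕ) (k : ℕ), h k (m 0) ≠ 0 →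
      ∃ m' j, Exec c m m' ∧ m' 2 = h j (m 0) ∧ h j (m 0) ≠ 0 := by
  obtain ⟨c, hc⟩ := comp_of_primrec (Nat.Primrec'.prim_iff₂.2 hh) ![1, 0] 2 (by
    intro i; fin_cases i <;> simp)
  let gd : DForm := .eq (.var 2) .zero
  let body : Cmd := .seq (.asg 1 (.succ (.var 1))) c
  have hc' : ∀ m : ℕ → ℕ, ∃ m', Exec c m m' ∧ m' 2 = h (m 1) (m 0) ∧ m' 0 = m 0 ∧ m' 1 = m 1 := by
    intro m
    obtain ⟨m', e, v, p⟩ := hc m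
    exact ⟨m', e, by rw [v]; rfl, p 0 (by omega), p 1 (by omega)⟩
  refine ⟨.seq (.asg 1 .zero) (.seq c (.loop gd body)), fun m k hk => ?_⟩
  have key : ∀ i j : ℕ, ∀ m₁ : ℕ → ℕ, j + i = k → m₁ 0 = m 0 → m₁ 1 = j → m₁ 2 = h j (m 0) →
      ∃ m' j, Exec (.loop gd body) m₁ m' ∧ m' 2 = h j (m 0) ∧ h j (m 0) ≠ 0 := by
    intro i
    induction i with
    | zero =>
      intro j m₁ hj h0 h1 h2
      obtain rfl : j = k := by omega
      exact ⟨m₁, j, .finish (by simp [gd, DForm.Holds, DTerm.eval, h2, hk]), h2, hk⟩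
    | succ i ih =>
      intro j m₁ hj h0 h1 h2
      by_cases hz : h j (m 0) = 0
      · obtain ⟨m₂, e₂, v₂, p₂, q₂⟩ := hc' (Function.update m₁ 1 (j + 1))
        simp [h0] at v₂ p₂ q₂
        obtain ⟨m', j', e', r'⟩ := ih (j + 1) m₂ (by omega) p₂ q₂ v₂
        refine ⟨m', j', .again (by simp [gd, DForm.Holds, DTerm.eval, h2, hz]) 
          (.seq (.asg _ _ _) ?_) e', r'⟩
        simpa [DTerm.eval, h1] using e₂
      · exact ⟨m₁, j, .finish (by simp [gd, DForm.Holds, DTerm.eval, h2, hz]), h2, hz⟩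
  obtain ⟨m₁, e₁, v₁, p₁, q₁⟩ := hc' (Function.update m 1 0)
  simp at v₁ p₁ q₁
  obtain ⟨m', j, e', r'⟩ := key k 0 m₁ (by omega) p₁ q₁ v₁
  exact ⟨m', j, .seq (.asg _ _ _) (.seq e₁ e'), r'⟩

/-! ### Symbolic execution of deterministic graphs without havoc. -/

theorem DTerm.eval_subst (σ : ℕ → DTerm) (ρ : ℕ → ℕ) (t : DTerm) :
    (t.subst σ).eval ρ = t.eval fun x => (σ x).eval ρ := by
  induction t <;> simp_all [DTerm.subst, DTerm.eval]

theorem DForm.holds_subst (σ : ℕ → DTerm) (ρ : ℕ → ℕ) (f : DForm) :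
    (f.subst σ).Holds ρ ↔ f.Holds fun x => (σ x).eval ρ := by
  induction f <;> simp_all [DForm.subst, DForm.Holds, DTerm.eval_subst]

theorem smemGet_cons (x : ℕ) (t : DTerm) (l : List (ℕ × DTerm)) (y : ℕ) :
    smemGet ((x, t) :: l) y = if y = x then t else smemGet l y := by
  unfold smemGet
  rw [List.lookup_cons]
  by_cases h : y = x
  · simp [h]
  · have : (y == x) = false := by simp [h]
    simp [h, this]

/-- A symbolic state represents a concrete memory. -/
def Rep (s : DSymState) (p : ℕ × (ℕ → ℕ)) : Prop :=
  s.loc = p.1 ∧ (∀ ρ x, (smemGet s.smem x).eval ρ = p.2 x) ∧ ∀ ρ, s.path.Holds ρ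

theorem rep_init : Rep initDSym (0, fun _ => 0) :=
  ⟨rfl, fun _ _ => rfl, fun _ => rfl⟩

theorem mem_of_lookup {E : List Edge} {k : ℕ × ℕ} {v : DInstr × DForm}
    (h : E.lookup k = some v) : (k, v) ∈ E := by
  induction E with
  | nil => simp at h
  | cons e E ih =>
    obtain ⟨k', v'⟩ := e
    rw [List.lookup_cons] at h
    by_cases hk : k = k'
    · subst hk; simp at h; simp [h]
    · have : (k == k') = false := by simp [hk]
      simp only [this] at h
      exact List.mem_cons_of_mem _ (ih h)

theorem lookup_of_mem {E : List Edge} {s t : ℕ} (hE : WF E s t) {k : ℕ × ℕ} {v : DInstr × DForm}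
    (h : (k, v) ∈ E) : E.lookup k = some v := by
  cases hl : E.lookup k with
  | none =>
    rw [List.lookup_eq_none_iff] at hl
    have := hl _ h
    simp at this
  | some v' =>
    have := hE.key _ (mem_of_lookup hl) _ h rfl
    simp at this
    rw [this]

theorem rep_step {E : List Edge} {s t : ℕ} (hE : WF E s t) {a b : DSymState} {p : ℕ × (ℕ → ℕ)}
    (hr : Rep a p) (h : DPG.SymStep ⟨E⟩ a b) : ∃ q, CStep E p q ∧ Rep b q := by
  obtain ⟨⟨i, g⟩, hl, hp, ⟨ρ, hρ⟩, hx⟩ := h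
  obtain ⟨r1, r2, r3⟩ := hr
  have hm := mem_of_lookup hl
  obtain ⟨x, u, hi⟩ := hE.asg _ hm
  simp only at hi hp hx hm
  subst hi
  obtain ⟨-, hx⟩ := hx
  simp only at hx
  have hg : ∀ ρ, (g.subst (smemGet a.smem)).Holds ρ ↔ g.Holds p.2 := by
    intro ρ
    rw [DForm.holds_subst]
    simp only [r2]
  have hgp : g.Holds p.2 := by
    rw [hp] at hρ
    exact (hg ρ).1 hρ.2
  refine ⟨(b.loc, Function.update p.2 x (u.eval p.2)), ⟨x, u, g, by rw [← r1]; exact hm, hgp, rfl⟩,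
    rfl, ?_, ?_⟩
  · intro ρ y
    rw [hx, smemGet_cons]
    by_cases hy : y = x
    · subst hy
      simp [DTerm.eval_subst, r2]
    · simp [hy, r2]
  · intro ρ
    rw [hp]
    exact ⟨r3 ρ, (hg ρ).2 hgp⟩

theorem rep_lift {E : List Edge} {s t : ℕ} (hE : WF E s t) {a : DSymState} {p q : ℕ × (ℕ → ℕ)}
    (hr : Rep a p) (h : CStep E p q) : ∃ b, DPG.SymStep ⟨E⟩ a b ∧ Rep b q := by
  obtain ⟨x, u, g, hm, hg, hq⟩ := h
  obtain ⟨r1, r2, r3⟩ := hr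
  have hgs : ∀ ρ, (g.subst (smemGet a.smem)).Holds ρ := by
    intro ρ
    rw [DForm.holds_subst]
    simpa only [r2] using hg
  refine ⟨⟨q.1, .and a.path (g.subst (smemGet a.smem)), (x, u.subst (smemGet a.smem)) :: a.smem,
    a.ctr⟩, ⟨(.assign x u, g), ?_, rfl, ⟨fun _ => 0, r3 _, hgs _⟩, rfl, rfl⟩, rfl, ?_, ?_⟩
  · rw [r1]; exact lookup_of_mem hE hm
  · intro ρ y
    simp only
    rw [smemGet_cons, hq]
    by_cases hy : y = x
    · subst hy
      simp [DTerm.eval_subst, r2]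
    · simp [hy, r2]
  · intro ρ
    exact ⟨r3 ρ, hgs ρ⟩

theorem cstep_unique {E : List Edge} {s t : ℕ} (hE : WF E s t) :
    Relator.RightUnique (CStep E) := by
  rintro ⟨l, m⟩ ⟨l₁, m₁⟩ ⟨l₂, m₂⟩ ⟨x, u, g, h, hg, rfl⟩ ⟨x', u', g', h', hg', rfl⟩
  have := hE.det _ h _ h' rfl m hg hg'
  simp only [Prod.mk.injEq, DInstr.assign.injEq] at this
  simp_all

/-- Symbolic steps out of states that represent a concrete configuration. -/
def RStep (E : List Edge) (a b : DSymState) : Prop :=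
  DPG.SymStep ⟨E⟩ a b ∧ ∃ p, Rep a p

theorem rstep_unique {E : List Edge} {s t : ℕ} (hE : WF E s t) :
    Relator.RightUnique (RStep E) := by
  rintro a b c ⟨hb, p, hp⟩ ⟨hc, -⟩
  have hb' := hb
  have hc' := hc
  obtain ⟨⟨i, g⟩, hl, h1, ⟨ρ, hρ⟩, hx⟩ := hb
  obtain ⟨⟨i', g'⟩, hl', h1', ⟨ρ', hρ'⟩, hx'⟩ := hc
  have hg : ∀ ρ g, (DForm.subst (smemGet a.smem) g).Holds ρ → g.Holds p.2 := by
    intro ρ g h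
    rw [DForm.holds_subst] at h
    simpa only [hp.2.1] using h
  rw [h1] at hρ
  rw [h1'] at hρ'
  have := hE.det _ (mem_of_lookup hl) _ (mem_of_lookup hl') rfl p.2 (hg _ _ hρ.2) (hg _ _ hρ'.2)
  simp only [Prod.mk.injEq, true_and] at this
  obtain ⟨q1, rfl, rfl⟩ := this
  obtain ⟨x, u, hi⟩ := hE.asg _ (mem_of_lookup hl)
  simp only at hi
  subst hi
  obtain ⟨b1, b2, b3, b4⟩ := b
  obtain ⟨c1, c2, c3, c4⟩ := c
  simp only [DInstr.symExec] at q1 h1 h1' hx hx'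
  simp [q1, h1, h1', hx, hx']

theorem rtg_rep {E : List Edge} {s t : ℕ} (hE : WF E s t) {a b : DSymState} {p : ℕ × (ℕ → ℕ)}
    (hr : Rep a p) (h : Relation.ReflTransGen (DPG.SymStep ⟨E⟩) a b) :
    Relation.ReflTransGen (RStep E) a b ∧ ∃ q, Relation.ReflTransGen (CStep E) p q ∧ Rep b q := by
  induction h with
  | refl => exact ⟨.refl, p, .refl, hr⟩
  | tail _ h ih =>
    obtain ⟨h1, q, h2, h3⟩ := ih
    obtain ⟨q', h4, h5⟩ := rep_step hE h3 h
    exact ⟨h1.tail ⟨h, q, h3⟩, q', h2.tail h4, h5⟩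

theorem rtg_lift {E : List Edge} {s t : ℕ} (hE : WF E s t) {a : DSymState} {p q : ℕ × (ℕ → ℕ)}
    (hr : Rep a p) (h : Relation.ReflTransGen (CStep E) p q) :
    ∃ b, Relation.ReflTransGen (DPG.SymStep ⟨E⟩) a b ∧ Rep b q := by
  induction h with
  | refl => exact ⟨a, .refl, hr⟩
  | tail _ h ih =>
    obtain ⟨b, h1, h2⟩ := ih
    obtain ⟨b', h3, h4⟩ := rep_lift hE h2 h
    exact ⟨b', h1.tail h3, h4⟩

theorem reach_of_trace {G : DPG} {τ : List DSymState} (h : τ ∈ G.SymTraces) :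
    ∀ s ∈ τ, Relation.ReflTransGen G.SymStep initDSym s := by
  obtain ⟨h1, h2⟩ := h
  cases τ with
  | nil => simp at h1
  | cons a τ =>
    simp at h1
    subst h1
    intro s hs
    exact List.IsChain.induction (fun s => Relation.ReflTransGen G.SymStep initDSym s) _ h2
      (fun _ _ hxy hx => hx.tail hxy) (by intro _; exact .refl) s hs

theorem no_step {E : List Edge} {s t : ℕ} (hE : WF E s t) {a b : DSymState} (ha : a.loc = t) :
    ¬ DPG.SymStep ⟨E⟩ a b := by
  rintro ⟨ig, hl, -⟩
  have := (hE.src _ (mem_of_lookup hl)).2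
  simp only at this
  omega

theorem no_cstep {E : List Edge} {s t : ℕ} (hE : WF E s t) {p q : ℕ × (ℕ → ℕ)} (ha : p.1 = t) :
    ¬ CStep E p q := by
  rintro ⟨x, u, g, hm, -⟩
  have := (hE.src _ hm).2
  simp only at this
  omega

theorem mem_KO {G : DPG} {t : ℕ} {w : List DSymState} (h : w ∈ G.SymTracesKO [t] 1) :
    ∃ s, w = [s] ∧ s.loc = t ∧ Relation.ReflTransGen G.SymStep initDSym s := by
  obtain ⟨⟨τ, hτ, hw⟩, hl⟩ := h
  obtain ⟨s, rfl⟩ := List.length_eq_one_iff.1 hl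
  have hs : s ∈ obsD [t] τ := by rw [← hw]; simp
  simp [obsD] at hs
  exact ⟨s, rfl, hs.2, reach_of_trace hτ s hs.1⟩

theorem KO_finite {E : List Edge} {s t : ℕ} (hE : WF E s t) :
    (DPG.SymTracesKO ⟨E⟩ [t] 1).Finite := by
  apply Set.Subsingleton.finite
  intro w₁ h₁ w₂ h₂
  obtain ⟨a, rfl, ha, ra⟩ := mem_KO h₁
  obtain ⟨b, rfl, hb, rb⟩ := mem_KO h₂
  have := Relation.ReflTransGen.total_of_right_unique (rstep_unique hE)
    (rtg_rep hE rep_init ra).1 (rtg_rep hE rep_init rb).1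
  rcases this with h | h
  · rcases h.cases_head with rfl | ⟨c, hc, -⟩
    · rfl
    · exact absurd hc.1 (no_step hE ha)
  · rcases h.cases_head with rfl | ⟨c, hc, -⟩
    · rfl
    · exact absurd hc.1 (no_step hE hb)

theorem KO_nonempty {E : List Edge} {s t : ℕ} (hE : WF E s t) {m : ℕ → ℕ}
    (h : Relation.ReflTransGen (CStep E) (0, fun _ => 0) (t, m)) :
    DPG.SymTracesKO ⟨E⟩ [t] 1 ≠ ∅ := by
  obtain ⟨b, hb, hr⟩ := rtg_lift hE rep_init h
  have key : ∃ τ : List DSymState, (τ ++ [b]).head? = some initDSym ∧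
      (τ ++ [b]).IsChain (DPG.SymStep ⟨E⟩) ∧ ∀ c ∈ τ, c.loc ≠ t := by
    clear hr h
    induction hb with
    | refl => exact ⟨[], rfl, by simp, by simp⟩
    | @tail b c _ hbc ih =>
      obtain ⟨τ, h1, h2, h3⟩ := ih
      refine ⟨τ ++ [b], ?_, ?_, ?_⟩
      · rw [List.head?_append, h1]; rfl
      · rw [List.isChain_append]
        refine ⟨h2, by simp, ?_⟩
        intro x hx y hy
        simp at hx hy
        subst hx hy
        exact hbc
      · intro x hx
        rcases List.mem_append.1 hx with hx | hx
        · exact h3 x hx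
        · simp at hx
          subst hx
          exact fun hh => no_step hE hh hbc
  obtain ⟨τ, h1, h2, h3⟩ := key
  refine Set.nonempty_iff_ne_empty.1 ⟨[b], ⟨τ ++ [b], ⟨h1, h2⟩, ?_⟩, rfl⟩
  have e1 : b.loc = t := hr.1
  have e2 : obsD [t] τ = [] := by
    simp [obsD, List.filter_eq_nil_iff]
    exact h3
  have e3 : obsD [t] [b] = [b] := by simp [obsD, e1]
  show _ = List.filter _ _
  rw [List.filter_append]
  show _ = obsD [t] τ ++ obsD [t] [b]
  rw [e2, e3]; rfl

theorem KO_empty {E : List Edge} {s t : ℕ} (hE : WF E s t) {q : ℕ × (ℕ → ℕ)}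
    (h : Relation.ReflTransGen (CStep E) (0, fun _ => 0) q) (hq : q.1 ≠ t)
    (hst : ∀ q', ¬ CStep E q q') : DPG.SymTracesKO ⟨E⟩ [t] 1 = ∅ := by
  rw [Set.eq_empty_iff_forall_notMem]
  intro w hw
  obtain ⟨a, rfl, ha, ra⟩ := mem_KO hw
  obtain ⟨-, p, hp, hr⟩ := rtg_rep hE rep_init ra
  have hpt : p.1 = t := by rw [← hr.1, ha]
  rcases Relation.ReflTransGen.total_of_right_unique (cstep_unique hE) h hp with h | h
  · rcases h.cases_head with rfl | ⟨c, hc, -⟩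
    · exact hq hpt
    · exact hst _ hc
  · rcases h.cases_head with rfl | ⟨c, hc, -⟩
    · exact hq hpt
    · exact no_cstep hE hpt hc

/-! ### The reduction. -/

/-- Numerals. -/
def numT : ℕ → DTerm
  | 0 => .zero
  | n + 1 => .succ (numT n)

theorem numT_eval (m : ℕ → ℕ) (n : ℕ) : (numT n).eval m = n := by
  induction n <;> simp_all [numT, DTerm.eval]

theorem numT_primrec : Primrec fun n => encodeDTerm (numT n) := by
  have h : Primrec fun n : ℕ => (Nat.rec (Nat.pair 1 0) (fun _ ih => Nat.pair 2 ih) n : ℕ) :=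
    Primrec.nat_rec₁ _ (Primrec₂.natPair.comp (.const 2) .snd).to₂
  refine h.of_eq fun n => ?_
  induction n with
  | zero => rfl
  | succ n ih => simp only [numT, encodeDTerm, ← ih]

/-- Evaluation of the `n`-th program on `n` with `k` steps: `0` if there is no value yet, `1` if the value is
zero, `2` otherwise. -/
def hEv (k n : ℕ) : ℕ :=
  Option.casesOn (Nat.Partrec.Code.evaln k (Denumerable.ofNat Nat.Partrec.Code n) n) 0
    fun v => Nat.casesOn v 1 fun _ => 2

theorem hEv_primrec : Primrec₂ hEv := by
  have h1 : Primrec fun p : ℕ × ℕ =>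
      Nat.Partrec.Code.evaln p.1 (Denumerable.ofNat Nat.Partrec.Code p.2) p.2 :=
    Nat.Partrec.Code.primrec_evaln.comp
      (.pair (.pair .fst ((Primrec.ofNat _).comp .snd)) .snd)
  have h2 : Primrec₂ fun (_ : ℕ × ℕ) (v : ℕ) => (Nat.casesOn v 1 fun _ => 2 : ℕ) :=
    Primrec.nat_casesOn .snd (.const 1) (Primrec.const 2).to₂
  exact Primrec.option_casesOn h1 (.const 0) h2

/-- The graph family. -/
def graph (c : Cmd) (n : ℕ) : DPG :=
  ⟨((0, 1), DInstr.assign 0 (numT n), fTrue) ::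
    (c.compile 1 ++ [((1 + c.size, 1 + c.size + 1), DInstr.assign 0 (.var 0),
      DForm.eq (.var 2) (.succ .zero))])⟩

theorem graph_wf (c : Cmd) (n : ℕ) : WF (graph c n).edges 0 (1 + c.size + 1) := by
  have h1 := WF.single 0 1 0 (numT n) fTrue
  have h2 := c.compile_wf 1
  have h3 := WF.single (1 + c.size) (1 + c.size + 1) 0 (.var 0) (DForm.eq (.var 2) (.succ .zero))
  exact h1.append (h2.append h3 (by omega) (by omega)) (by omega) (by omega)

theorem graph_primrec (c : Cmd) : Primrec fun n => encodeDPG (graph c n) := by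
  unfold encodeDPG graph encodeList
  simp only [encodeDInstr]
  exact Primrec.succ.comp (Primrec₂.natPair.comp (Primrec₂.natPair.comp (.const _)
    (Primrec₂.natPair.comp (Primrec₂.natPair.comp (.const _)
      (Primrec₂.natPair.comp (.const _) numT_primrec)) (.const _))) (.const _))

theorem key_lemma : ∃ (G : ℕ → DPG) (t : ℕ), (Primrec fun n => encodeDPG (G n)) ∧
    (∀ n, ((G n).SymTracesKO [t] 1).Finite) ∧
    ¬ ∃ d : ℕ →. ℕ, Nat.Partrec d ∧ ∀ n, d n =
      Part.some (if (G n).SymTracesKO [t] 1 = ∅ then 0 else 1) := by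
  obtain ⟨c, hc⟩ := search hEv_primrec
  refine ⟨graph c, 1 + c.size + 1, graph_primrec c, fun n => KO_finite (graph_wf c n), ?_⟩
  rintro ⟨d, hd, hval⟩
  obtain ⟨cd, hcd⟩ := Nat.Partrec.Code.exists_code.1 hd
  set n := Encodable.encode cd with hn
  have hof : Denumerable.ofNat Nat.Partrec.Code n = cd := by rw [hn]; simp
  obtain ⟨v, hv⟩ : ∃ v, v = if (graph c n).SymTracesKO [1 + c.size + 1] 1 = ∅ then 0 else 1 :=
    ⟨_, rfl⟩
  have hdv : cd.eval n = Part.some v := by rw [hcd, hval, hv]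
  have hsome : v ∈ cd.eval n := by rw [hdv]; simp
  obtain ⟨k, hk⟩ := Nat.Partrec.Code.evaln_complete.1 hsome
  have hk0 : hEv k n ≠ 0 := by
    unfold hEv
    rw [hof, Option.mem_def.1 hk]
    cases v <;> simp
  let m1 : ℕ → ℕ := Function.update (fun _ => 0) 0 n
  obtain ⟨m', j, ex, hm', hj⟩ := hc m1 k (by simpa [m1] using hk0)
  simp only [m1, Function.update_self] at hm' hj
  have hjv : hEv j n = if v = 0 then 1 else 2 := by
    unfold hEv at hj ⊢
    rw [hof] at hj ⊢
    cases hw : Nat.Partrec.Code.evaln j cd n with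
    | none => rw [hw] at hj; exact absurd rfl hj
    | some w =>
      have h1 := Nat.Partrec.Code.evaln_sound (Option.mem_def.2 hw)
      rw [hdv] at h1
      simp at h1
      subst h1
      cases w <;> simp
  have s1 : CStep (graph c n).edges (0, fun _ => 0) (1, m1) :=
    ⟨0, numT n, fTrue, by simp [graph], rfl, by simp [m1, numT_eval]⟩
  have s2 := ex.reach (graph c n).edges 1 (by intro x hx; simp [graph, hx])
  have s3 := (Relation.ReflTransGen.single s1).trans s2
  by_cases h0 : v = 0
  · have s4 : CStep (graph c n).edges (1 + c.size, m') (1 + c.size + 1, m') :=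
      CStep.nop (g := DForm.eq (.var 2) (.succ .zero)) (by simp [graph, nopI])
        (by simp [DForm.Holds, DTerm.eval, hm', hjv, h0])
    have := KO_nonempty (graph_wf c n) (s3.tail s4)
    rw [if_neg this] at hv
    omega
  · have := KO_empty (graph_wf c n) s3 (by simp) (by
      rintro ⟨l', m''⟩ ⟨x, u, g, hm, hg, -⟩
      simp only [graph, List.mem_cons, List.mem_append, List.not_mem_nil, or_false] at hm
      rcases hm with hm | hm | hm
      · simp at hm
      · have := ((c.compile_wf 1).src _ hm).2
        simp at this
      · simp only [Prod.mk.injEq] at hm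
        rw [hm.2.2] at hg
        simp [DForm.Holds, DTerm.eval, hm', hjv, h0] at hg)
    rw [if_pos this] at hv
    exact h0 hv

/-- Over the standard structure of natural-number arithmetic, there is
no computable (partial recursive) function that, given (the encoding of) a program graph
`G`, a set `O` of its locations and `k ∈ ℕ` such that `SymTraces^k_O(G)` is finite,
outputs (the encoding of a finite list enumerating) the set `SymTraces^k_O(G)`.
In particular, the predicate `SymTraces^1_{{ℓ}}(G) = ∅` is undecidable on inputs
`(G, ℓ)` for which `SymTraces^1_{{ℓ}}(G)` is finite. -/
theorem symTracesKO_not_computable :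
    (¬ ∃ f : ℕ →. ℕ, Nat.Partrec f ∧
        ∀ (G : DPG) (O : List ℕ) (k : ℕ), (G.SymTracesKO O k).Finite →
          ∃ l : List (List DSymState),
            (∀ t, t ∈ l ↔ t ∈ G.SymTracesKO O k) ∧
            f (encodeInput G O k) = Part.some (encodeList encodeDSymTrace l)) ∧
    ¬ ∃ f : ℕ →. ℕ, Nat.Partrec f ∧
        ∀ (G : DPG) (ℓ : ℕ), (G.SymTracesKO [ℓ] 1).Finite →
          f (Nat.pair (encodeDPG G) ℓ) =
            Part.some (if G.SymTracesKO [ℓ] 1 = ∅ then 0 else 1) := by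
  obtain ⟨G, t, hG, hfin, hno⟩ := key_lemma
  constructor
  · rintro ⟨f, hf, h⟩
    apply hno
    refine ⟨fun n => (f (encodeInput (G n) [t] 1)).map fun x => if x = 0 then 0 else 1, ?_, ?_⟩
    · refine Partrec.nat_iff.1 ?_
      refine Partrec.map ((Partrec.nat_iff.2 hf).comp ?_) ?_
      · exact (Primrec₂.natPair.comp hG (.const _)).to_comp
      · exact (Primrec.ite (Primrec.eq.comp .snd (.const 0)) (.const 0) (.const 1)).to_comp
    · intro n
      obtain ⟨l, hl, hfl⟩ := h (G n) [t] 1 (hfin n)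
      show (f (encodeInput (G n) [t] 1)).map _ = _
      rw [hfl, Part.map_some]
      congr 1
      cases l with
      | nil =>
        have : (G n).SymTracesKO [t] 1 = ∅ := by
          rw [Set.eq_empty_iff_forall_notMem]
          intro x hx
          simpa using (hl x).2 hx
        rw [if_pos this]; rfl
      | cons a l =>
        have : (G n).SymTracesKO [t] 1 ≠ ∅ :=
          Set.nonempty_iff_ne_empty.1 ⟨a, (hl a).1 (by simp)⟩
        rw [if_neg this]; rfl
  · rintro ⟨f, hf, h⟩
    apply hno
    refine ⟨fun n => f (Nat.pair (encodeDPG (G n)) t), ?_, fun n => h (G n) t (hfin n)⟩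
    refine Partrec.nat_iff.1 ((Partrec.nat_iff.2 hf).comp ?_)
    exact (Primrec₂.natPair.comp hG (.const _)).to_comp

end HyperSE11
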